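/- Recovering uniform-convergence bounds from a parametric function: Let ℓ : H × Z → ℝ be a measurable loss, φ : ℝ² → ℝ measurable, P a prior density on H, δ ∈ (0,1], and suppose Φ_uc : (0,1] → ℝ is a uniform convergence bound, i.e. for every δ′ ∈ (0,1], P_{S∼D^m}[ sup_{h∈H} φ(R_D^ℓ(h), R_S^ℓ(h)) ≤ Φ_uc(δ′) ] ≥ 1−δ′. Then, setting μ(h,S) = −φ(R_D^ℓ(h), R_S^ℓ(h)) − Φ_uc(δ/2) − ln P(h), Theorem 3 applied with this μ yields: with probability at least 1−δ over S ∼ D^m and h′ ∼ P (independent), sup_{f∈H} φ(R_D^ℓ(f), R_S^ℓ(f)) ≤ Φ_uc(δ/2) + ln[(16/δ²)·E_{V∼D^m} E_{g∼P} e^{φ(R_D^ℓ(g), R_V^ℓ(g)) − φ(R_D^ℓ(h′), R_S^ℓ(h′))}]. -/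

import Mathlib

open MeasureTheory ProbabilityTheory

/-- The true risk `R_D^ℓ(h) = E_{z∼D} ℓ(h,z)`. -/
noncomputable def trueRisk {H Z : Type*} [MeasurableSpace Z]
    (D : Measure Z) (ℓ : H → Z → ℝ) (h : H) : ℝ :=
  ∫ z, ℓ h z ∂D

/-- The empirical risk `R_S^ℓ(h) = (1/m) Σ_{i=1}^m ℓ(h,z_i)`. -/
noncomputable def empRisk {H Z : Type*} {m : ℕ}
    (ℓ : H → Z → ℝ) (h : H) (S : Fin m → Z) : ℝ :=
  (∑ i, ℓ h (S i)) / m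

/-!
On the event of the uniform convergence bound, which has probability at least `1 - δ/2`, it is
enough that the logarithmic term is nonnegative. Put `F (S, h) = exp (φ (R_D h) (R_S h))`. The
argument of the logarithm at `(S, h')` is `(16/δ²) * 𝔼 F / F (S, h')`, so by Markov's inequality
it is less than `1` with probability at most `δ²/16 ≤ δ/2`.
-/

section Markov

variable {α : Type*} [MeasurableSpace α] {ν : Measure α}

lemma measure_mul_lintegral_lt_le_inv {f : α → ENNReal} (hf : AEMeasurable f ν) (c : ENNReal) :
    ν {x | c * ∫⁻ y, f y ∂ν < f x} ≤ c⁻¹ := by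
  rcases eq_or_ne c 0 with rfl | hc
  · simp
  rcases eq_or_ne (∫⁻ y, f y ∂ν) 0 with hI | hI
  · have h_null : ν {x | 0 < f x} = 0 := by
      rw [measure_eq_zero_iff_ae_notMem]
      filter_upwards [(lintegral_eq_zero_iff' hf).1 hI] with x hx
      simp [hx]
    simp only [hI, mul_zero, h_null, zero_le]
  rcases eq_or_ne (c * ∫⁻ y, f y ∂ν) ⊤ with hcI | hcI
  · simp [hcI]
  have hI_top : ∫⁻ y, f y ∂ν ≠ ⊤ := fun h ↦ hcI (h ▸ ENNReal.mul_top hc)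
  calc ν {x | c * ∫⁻ y, f y ∂ν < f x}
      ≤ ν {x | c * ∫⁻ y, f y ∂ν ≤ f x} := measure_mono fun x (hx : _ < f x) ↦ hx.le
    _ ≤ (∫⁻ y, f y ∂ν) / (c * ∫⁻ y, f y ∂ν) :=
        meas_ge_le_lintegral_div hf (mul_ne_zero hc hI) hcI
    _ = 1 * (∫⁻ y, f y ∂ν) / (c * ∫⁻ y, f y ∂ν) := by rw [one_mul]
    _ = c⁻¹ := by rw [ENNReal.mul_div_mul_right _ _ hI hI_top, one_div]

lemma lintegral_ofReal_exp_sub_const (g : α → ℝ) (a : ℝ) :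
    ∫⁻ x, ENNReal.ofReal (Real.exp (g x - a)) ∂ν =
      (∫⁻ x, ENNReal.ofReal (Real.exp (g x)) ∂ν) / ENNReal.ofReal (Real.exp a) := by
  have hinv : (ENNReal.ofReal (Real.exp a))⁻¹ ≠ ⊤ := by simp [Real.exp_pos]
  simp_rw [Real.exp_sub, ENNReal.ofReal_div_of_pos (Real.exp_pos a), div_eq_mul_inv]
  exact lintegral_mul_const' _ _ hinv

lemma measure_mul_lintegral_exp_sub_lt_one_le_inv {g : α → ℝ} (hg : AEMeasurable g ν)
    (c : ENNReal) :
    ν {x | c * ∫⁻ y, ENNReal.ofReal (Real.exp (g y - g x)) ∂ν < 1} ≤ c⁻¹ := by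
  have hexp : AEMeasurable (fun x ↦ ENNReal.ofReal (Real.exp (g x))) ν := hg.exp.ennreal_ofReal
  convert measure_mul_lintegral_lt_le_inv hexp c using 4 with x
  rw [lintegral_ofReal_exp_sub_const, ← mul_div_assoc,
    ENNReal.div_lt_iff (by simp [Real.exp_pos]) (by simp), one_mul]

end Markov

section Risk

variable {Z H : Type*} [MeasurableSpace Z] [MeasurableSpace H] {ℓ : H → Z → ℝ}

lemma measurable_trueRisk (D : Measure Z) [SFinite D] (hℓ : Measurable (Function.uncurry ℓ)) :
    Measurable (trueRisk D ℓ) :=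
  hℓ.stronglyMeasurable.integral_prod_right.measurable

lemma measurable_empRisk (m : ℕ) (hℓ : Measurable (Function.uncurry ℓ)) :
    Measurable fun p : (Fin m → Z) × H ↦ empRisk ℓ p.2 p.1 :=
  (Finset.measurable_sum _ fun i _ ↦
    hℓ.comp (measurable_snd.prodMk ((measurable_pi_apply i).comp measurable_fst))).div_const _

lemma measurable_riskGap (m : ℕ) (D : Measure Z) [SFinite D]
    (hℓ : Measurable (Function.uncurry ℓ)) {φ : ℝ → ℝ → ℝ} (hφ : Measurable (Function.uncurry φ)) :
    Measurable (Function.uncurry fun (S : Fin m → Z) (h : H) ↦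
      φ (trueRisk D ℓ h) (empRisk ℓ h S)) :=
  hφ.comp (((measurable_trueRisk D hℓ).comp measurable_snd).prodMk (measurable_empRisk m hℓ))

end Risk

lemma ofReal_half_add_inv_ofReal_le {δ : ℝ} (hδ : δ ∈ Set.Ioc (0 : ℝ) 1) :
    ENNReal.ofReal (δ / 2) + (ENNReal.ofReal (16 / δ ^ 2))⁻¹ ≤ ENNReal.ofReal δ := by
  obtain ⟨hpos, hle⟩ := hδ
  rw [← ENNReal.ofReal_inv_of_pos (by positivity), inv_div,
    ← ENNReal.ofReal_add (by positivity) (by positivity)]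
  exact ENNReal.ofReal_le_ofReal (by nlinarith)

theorem uniform_convergence_from_parametric_function_general
    {Ω H : Type*} [MeasurableSpace Ω] [MeasurableSpace H]
    {μ : Measure Ω} {π : Measure H} [IsProbabilityMeasure π]
    {gap : Ω → H → ℝ} (hgap : AEMeasurable (Function.uncurry gap) (μ.prod π))
    {ε : ENNReal} {B : ℝ} (hB : 1 - ε ≤ μ {ω | ∀ h, gap ω h ≤ B}) (c : ENNReal) :
    1 - (ε + c⁻¹) ≤ (μ.prod π) {p | ∀ f, (gap p.1 f : EReal) ≤ (B : EReal) +
      ENNReal.log (c * ∫⁻ V, ∫⁻ g, ENNReal.ofReal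
        (Real.exp (gap V g - gap p.1 p.2)) ∂π ∂μ)} := by
  set uniform : Set (Ω × H) := {ω | ∀ h, gap ω h ≤ B} ×ˢ Set.univ
  set small : Set (Ω × H) := {p | c * ∫⁻ q, ENNReal.ofReal
    (Real.exp (Function.uncurry gap q - Function.uncurry gap p)) ∂μ.prod π < 1}
  have h_uniform : 1 - ε ≤ (μ.prod π) uniform := by
    rwa [Measure.prod_prod, measure_univ, mul_one]
  have h_small : (μ.prod π) small ≤ c⁻¹ := measure_mul_lintegral_exp_sub_lt_one_le_inv hgap c
  calc 1 - (ε + c⁻¹) = 1 - ε - c⁻¹ := (tsub_tsub _ _ _).symm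
    _ ≤ (μ.prod π) uniform - (μ.prod π) small := tsub_le_tsub h_uniform h_small
    _ ≤ (μ.prod π) (uniform \ small) := le_measure_sdiff
    _ ≤ _ := measure_mono ?_
  rintro p ⟨⟨hp_uniform, -⟩, hp_small⟩ f
  rw [Set.mem_ofPred_eq, not_lt,
    lintegral_prod _ (hgap.sub_const _).exp.ennreal_ofReal] at hp_small
  exact (EReal.coe_le_coe_iff.2 (hp_uniform f)).trans
    (le_add_of_nonneg_right (ENNReal.zero_le_log_iff.2 hp_small))

/-- **Recovering uniform-convergence bounds from a parametric function.**
If `Φ_uc` is a uniform convergence bound for the gap `φ`, then (applying the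
main theorem with `μ(h,S) = −φ(R_D^ℓ(h), R_S^ℓ(h)) − Φ_uc(δ/2) − ln P(h)`)
with probability at least `1−δ` over `S ∼ D^m` and `h′ ∼ P` independent,
`sup_{f∈H} φ(R_D^ℓ(f), R_S^ℓ(f)) ≤ Φ_uc(δ/2)
  + ln[(16/δ²)·E_{V∼D^m} E_{g∼P} e^{φ(R_D^ℓ(g),R_V^ℓ(g)) − φ(R_D^ℓ(h′),R_S^ℓ(h′))}]`
(stated in `EReal`, with `sup ≤ c` expressed as `∀ f, … ≤ c`). -/
theorem uniform_convergence_from_parametric_function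
    {Z H : Type*} [MeasurableSpace Z] [MeasurableSpace H]
    (m : ℕ) (hm : 0 < m)
    (D : Measure Z) [IsProbabilityMeasure D]
    (lam : Measure H) [SigmaFinite lam]
    (ℓ : H → Z → ℝ) (hℓ : Measurable (Function.uncurry ℓ))
    (φ : ℝ → ℝ → ℝ) (hφ : Measurable (Function.uncurry φ))
    (P : H → ℝ) (hPpos : ∀ h, 0 < P h) (hPmeas : Measurable P)
    (Pm : Measure H) [IsProbabilityMeasure Pm]
    (hPm : Pm = lam.withDensity fun h => ENNReal.ofReal (P h))
    (δ : ℝ) (hδ : δ ∈ Set.Ioc (0:ℝ) 1)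
    -- `Φ_uc` is a uniform convergence bound
    (Φuc : ℝ → ℝ)
    (hΦuc : ∀ δ' ∈ Set.Ioc (0:ℝ) 1,
      1 - ENNReal.ofReal δ' ≤
        (Measure.pi (fun _ : Fin m => D))
          {S : Fin m → Z | ∀ h : H,
            φ (trueRisk D ℓ h) (empRisk ℓ h S) ≤ Φuc δ'})
    -- the Gibbs normalizer of `μ(h,S) = −φ(R_D(h),R_S(h)) − Φ_uc(δ/2) − ln P(h)`
    -- is finite and positive for each `S`
    (hμint : ∀ S : Fin m → Z, Integrable (fun g =>
      Real.exp (-(-(φ (trueRisk D ℓ g) (empRisk ℓ g S)) - Φuc (δ/2)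
        - Real.log (P g)))) lam)
    (hZpos : ∀ S : Fin m → Z, 0 < ∫ g,
      Real.exp (-(-(φ (trueRisk D ℓ g) (empRisk ℓ g S)) - Φuc (δ/2)
        - Real.log (P g))) ∂lam) :
    1 - ENNReal.ofReal δ ≤
      ((Measure.pi (fun _ : Fin m => D)).prod Pm)
        {p : (Fin m → Z) × H | ∀ f : H,
          (φ (trueRisk D ℓ f) (empRisk ℓ f p.1) : EReal) ≤
            ((Φuc (δ/2) : ℝ) : EReal)
            + ENNReal.log (ENNReal.ofReal (16/δ^2) *
                ∫⁻ V, ∫⁻ g, ENNReal.ofReal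
                    (Real.exp (φ (trueRisk D ℓ g) (empRisk ℓ g V)
                      - φ (trueRisk D ℓ p.2) (empRisk ℓ p.2 p.1))) ∂Pm
                  ∂(Measure.pi (fun _ : Fin m => D))) } := by
  have h_half : δ / 2 ∈ Set.Ioc (0 : ℝ) 1 := ⟨half_pos hδ.1, by linarith [hδ.2]⟩
  exact (tsub_le_tsub_left (ofReal_half_add_inv_ofReal_le hδ) 1).trans
    (uniform_convergence_from_parametric_function_general
      (measurable_riskGap m D hℓ hφ).aemeasurable (hΦuc (δ / 2) h_half) _)
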